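/- There exists a constant C₂ > 1 such that for every integer x ≥ 1 and every element W of the normal closure of R_t in F₅ with |W| ≤ x, W can be written as a product of at most C₂·x·2^x conjugates of elements of R_t ∪ R_t⁻¹. That is, the Dehn 2-function of the finite presentation of the group Γ_t is bounded from above by C₂·2^x·x. -/

import Mathlib

/-- The five-letter alphabet `{a, b, c, d, t}`. -/
inductive L5 : Type
  | a | b | c | d | t
  deriving DecidableEq

/-- The free group `F₅ = F(a, b, c, d, t)`. -/
abbrev F5 : Type := FreeGroup L5

def ga : F5 := FreeGroup.of L5.a
def gb : F5 := FreeGroup.of L5.b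
def gc : F5 := FreeGroup.of L5.c
def gd : F5 := FreeGroup.of L5.d
def gt : F5 := FreeGroup.of L5.t

/-- The HNN relators `t g t⁻¹ σ(g)⁻¹`, `g ∈ {a, b, c, d}`, where
`σ(a) = aca`, `σ(b) = d`, `σ(c) = b`, `σ(d) = c`. -/
def RHNN : Set F5 :=
  {gt * ga * gt⁻¹ * (ga * gc * ga)⁻¹, gt * gb * gt⁻¹ * gd⁻¹,
   gt * gc * gt⁻¹ * gb⁻¹, gt * gd * gt⁻¹ * gc⁻¹}

/-- The relator set of the finite presentation of the group `Γ_t`. -/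
def Rt : Set F5 :=
  {ga ^ 2, gb ^ 2, gc ^ 2, gd ^ 2, gb * gc * gd,
   (ga * gd) ^ 4, (ga * gd * ga * gc * ga * gc) ^ 4} ∪ RHNN

/-- `W` is a product of `L` conjugates of elements of `R ∪ R⁻¹`. -/
def IsProdConjPM {G : Type*} [Group G] (R : Set G) (L : ℕ) (W : G) : Prop :=
  ∃ f : Fin L → G,
    (∀ j, ∃ x r, r ∈ R ∧ (f j = x * r * x⁻¹ ∨ f j = x * r⁻¹ * x⁻¹)) ∧
    W = (List.ofFn f).prod

/-!
A word `W` for the identity of `Γ_t` has as many letters `t` as `t⁻¹`, say `P` of each, and `n`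
other letters. As `t x t⁻¹ = σ(x)`, collecting the powers of `t` replaces `W`, up to conjugation by
a power of `t`, by a word `w` in `a, b, c, d`. Its length is at most `2n · 2^P`, because `σ^m`
multiplies lengths by at most `2^(m+1)`. It remains to fill `w`, a trivial word of `Γ`, with
quadratic area, since `(n · 2^P)² = n² · 2^(2P)` is of order at most `2^(n + 2P) = 2^|W|`.

For the quadratic bound let `w₀`, `w₁` be the sections of `w` on the two subtrees of the binary
tree. In `Γ_t` the word `w` equals `(at) w₀ (at)⁻¹ · t w₁ t⁻¹`. To see this with quadratic area,
rewrite `w₀` as a product of conjugates of `b` under the dihedral group `⟨a, d⟩` times `φ(w₁)`,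
where `φ(w₁)` is trivial in `⟨a, d⟩`; the same product of conjugates of `b`, conjugated by `at`,
splits off `t w₁ t⁻¹` from `w`. The finitely many commutations involved follow from the relators
`(ad)⁴` and `(adacac)⁴`. The sections of a reduced word are shorter by a factor of two, so the areas
of the successive steps form a geometric series.
-/

section Area

variable {G : Type*} [Group G] {R : Set G}

/-- `W` has area at most `n` over the relators `R`: it is a product of at most `n` conjugates of
elements of `R ∪ R⁻¹`. -/
def AreaLE (R : Set G) (n : ℕ) (W : G) : Prop :=
  ∃ L ≤ n, IsProdConjPM R L W

theorem areaLE_iff_exists_list {n : ℕ} {W : G} :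
    AreaLE R n W ↔ ∃ l : List G, l.length ≤ n ∧
      (∀ y ∈ l, y ∈ Group.conjugatesOfSet (R ∪ R⁻¹)) ∧ l.prod = W := by
  have mem_iff (y : G) : y ∈ Group.conjugatesOfSet (R ∪ R⁻¹) ↔
      ∃ x r, r ∈ R ∧ (y = x * r * x⁻¹ ∨ y = x * r⁻¹ * x⁻¹) := by
    simp only [Group.mem_conjugatesOfSet_iff, isConj_iff, Set.mem_union, Set.mem_inv]
    constructor
    · rintro ⟨r, hr | hr, x, rfl⟩
      · exact ⟨x, r, hr, .inl rfl⟩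
      · exact ⟨x, r⁻¹, hr, .inr (by rw [inv_inv])⟩
    · rintro ⟨x, r, hr, rfl | rfl⟩
      · exact ⟨r, .inl hr, x, rfl⟩
      · exact ⟨r⁻¹, .inr (by rwa [inv_inv]), x, rfl⟩
  constructor
  · rintro ⟨L, hL, f, hf, rfl⟩
    refine ⟨List.ofFn f, by rwa [List.length_ofFn], fun y hy ↦ ?_, rfl⟩
    obtain ⟨j, rfl⟩ := List.mem_ofFn.1 hy
    exact (mem_iff _).2 (hf j)
  · rintro ⟨l, hlen, hl, rfl⟩
    exact ⟨l.length, hlen, l.get, fun j ↦ (mem_iff _).1 (hl _ (l.get_mem j)),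
      by rw [List.ofFn_get]⟩

namespace AreaLE

variable {n m : ℕ} {U V : G}

theorem mono (h : AreaLE R n U) (hnm : n ≤ m) : AreaLE R m U :=
  let ⟨L, hL, h⟩ := h
  ⟨L, hL.trans hnm, h⟩

theorem one : AreaLE R 0 1 :=
  areaLE_iff_exists_list.2 ⟨[], by simp⟩

theorem of_mem (h : U ∈ R) : AreaLE R 1 U :=
  areaLE_iff_exists_list.2
    ⟨[U], by simpa using Group.subset_conjugatesOfSet (Set.mem_union_left _ h)⟩

theorem mul (hU : AreaLE R n U) (hV : AreaLE R m V) : AreaLE R (n + m) (U * V) := by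
  obtain ⟨l, hl, hlR, rfl⟩ := areaLE_iff_exists_list.1 hU
  obtain ⟨k, hk, hkR, rfl⟩ := areaLE_iff_exists_list.1 hV
  refine areaLE_iff_exists_list.2 ⟨l ++ k, ?_, ?_, List.prod_append⟩
  · rw [List.length_append]
    gcongr
  · exact List.forall_mem_append.2 ⟨hlR, hkR⟩

theorem inv (hU : AreaLE R n U) : AreaLE R n U⁻¹ := by
  obtain ⟨l, hl, hlR, rfl⟩ := areaLE_iff_exists_list.1 hU
  refine areaLE_iff_exists_list.2
    ⟨(l.map (·⁻¹)).reverse, by simpa using hl, ?_, (l.prod_inv_reverse).symm⟩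
  simp only [List.mem_reverse, List.forall_mem_map]
  intro y hy
  obtain ⟨r, hr, hry⟩ := Group.mem_conjugatesOfSet_iff.1 (hlR y hy)
  obtain ⟨x, rfl⟩ := isConj_iff.1 hry
  refine Group.mem_conjugatesOfSet_iff.2 ⟨r⁻¹, ?_, isConj_iff.2 ⟨x, by group⟩⟩
  simpa [or_comm] using hr

theorem conj (hU : AreaLE R n U) (g : G) : AreaLE R n (g * U * g⁻¹) := by
  obtain ⟨l, hl, hlR, rfl⟩ := areaLE_iff_exists_list.1 hU
  refine areaLE_iff_exists_list.2
    ⟨l.map (MulAut.conj g), by simpa using hl, ?_, (map_list_prod (MulAut.conj g) l).symm⟩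
  simp only [List.forall_mem_map, MulAut.conj_apply]
  exact fun y hy ↦ Group.conj_mem_conjugatesOfSet (hlR y hy)

end AreaLE

theorem mem_normalClosure_iff_exists_areaLE {W : G} :
    W ∈ Subgroup.normalClosure R ↔ ∃ n, AreaLE R n W := by
  constructor
  · intro h
    induction h using Subgroup.closure_induction with
    | mem x hx =>
      obtain ⟨r, hr, hrx⟩ := Group.mem_conjugatesOfSet_iff.1 hx
      obtain ⟨g, rfl⟩ := isConj_iff.1 hrx
      exact ⟨1, (AreaLE.of_mem hr).conj g⟩
    | one => exact ⟨0, AreaLE.one⟩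
    | mul x y _ _ hx hy =>
      obtain ⟨n, hn⟩ := hx
      obtain ⟨m, hm⟩ := hy
      exact ⟨_, hn.mul hm⟩
    | inv x _ hx =>
      obtain ⟨n, hn⟩ := hx
      exact ⟨n, hn.inv⟩
  · rintro ⟨n, L, -, f, hf, rfl⟩
    refine Subgroup.list_prod_mem _ fun y hy ↦ ?_
    obtain ⟨j, rfl⟩ := List.mem_ofFn.1 hy
    have normal := Subgroup.normalClosure_normal (s := R)
    obtain ⟨x, r, hr, h | h⟩ := hf j <;> rw [h]
    · exact normal.conj_mem _ (Subgroup.subset_normalClosure hr) _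
    · exact normal.conj_mem _ (inv_mem (Subgroup.subset_normalClosure hr)) _

/-- `U` can be rewritten to `V` at the cost of at most `n` applications of the relators `R`. -/
def AreaEq (R : Set G) (n : ℕ) (U V : G) : Prop :=
  AreaLE R n (U * V⁻¹)

namespace AreaEq

variable {n m : ℕ} {U V W : G}

theorem mono (h : AreaEq R n U V) (hnm : n ≤ m) : AreaEq R m U V :=
  AreaLE.mono h hnm

theorem of_eq (h : U = V) : AreaEq R 0 U V := by
  rw [AreaEq, h, mul_inv_cancel]
  exact AreaLE.one

theorem symm (h : AreaEq R n U V) : AreaEq R n V U := by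
  simpa [AreaEq] using AreaLE.inv h

theorem trans (h : AreaEq R n U V) (h' : AreaEq R m V W) : AreaEq R (n + m) U W := by
  simpa [AreaEq] using AreaLE.mul h h'

theorem mul_left (g : G) (h : AreaEq R n U V) : AreaEq R n (g * U) (g * V) := by
  simpa [AreaEq, mul_assoc] using AreaLE.conj h g

theorem mul_right (g : G) (h : AreaEq R n U V) : AreaEq R n (U * g) (V * g) := by
  simpa [AreaEq, mul_assoc] using h

theorem areaLE (h : AreaEq R n U V) (hV : AreaLE R m V) : AreaLE R (n + m) U := by
  simpa using AreaLE.mul h hV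

theorem mk_eq_mk (h : AreaEq R n U V) : (U : G ⧸ Subgroup.normalClosure R) = V := by
  have := mem_normalClosure_iff_exists_areaLE.2 ⟨n, h.symm⟩
  exact QuotientGroup.eq.2 (Subgroup.normalClosure_normal.mem_comm this)

end AreaEq

theorem exists_forall_areaEq {ι : Type*} [Finite ι] {u v : ι → G}
    (h : ∀ i, (u i : G ⧸ Subgroup.normalClosure R) = v i) : ∃ c, ∀ i, AreaEq R c (u i) (v i) := by
  have exists_area (i : ι) : ∃ n, AreaEq R n (u i) (v i) := mem_normalClosure_iff_exists_areaLE.1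
    (Subgroup.normalClosure_normal.mem_comm (QuotientGroup.eq.1 (h i).symm))
  choose n hn using exists_area
  cases nonempty_fintype ι
  exact ⟨Finset.univ.sup n, fun i ↦ (hn i).mono (Finset.le_sup (Finset.mem_univ i))⟩

namespace AreaEq

variable {ι : Type*} {c : ℕ}

theorem prod_map_mul_foldr {κ : Type*} {u : ι → G} {N : κ → G} {step : ι → κ → κ}
    (h : ∀ i k, AreaEq R c (u i * N k) (N (step i k))) (l : List ι) (k : κ) :
    AreaEq R (c * l.length) ((l.map u).prod * N k) (N (l.foldr step k)) := by
  induction l with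
  | nil => exact .of_eq (by simp)
  | cons i l ih =>
    have := (ih.mul_left (u i)).trans (h i (l.foldr step k))
    simpa [mul_assoc, mul_add] using this

theorem mul_prod_map {p : G} {u v : ι → G} (h : ∀ i, AreaEq R c (p * u i) (v i * p))
    (l : List ι) : AreaEq R (c * l.length) (p * (l.map u).prod) ((l.map v).prod * p) := by
  induction l with
  | nil => exact .of_eq (by simp)
  | cons i l ih =>
    have := ((h i).mul_right (l.map u).prod).trans
      ((AreaEq.of_eq (mul_assoc _ _ _)).trans (ih.mul_left (v i)))
    simpa [mul_assoc, mul_add, add_comm] using this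

end AreaEq

end Area

namespace Grigorchuk

/-- The generators of the Grigorchuk group `Γ`. -/
inductive Letter
  | a | b | c | d
  deriving DecidableEq

open Letter

instance : Fintype Letter :=
  ⟨{a, b, c, d}, by rintro (_ | _ | _ | _) <;> decide⟩

section Eval

variable {G H : Type*} [Group G] [Group H] (f : Letter → G)

/-- The value of a word in the four letters once each letter is given a value in a group. -/
def eval (l : List Letter) : G :=
  (l.map f).prod

@[simp]
theorem eval_nil : eval f [] = 1 := rfl

@[simp]
theorem eval_cons (g : Letter) (l : List Letter) : eval f (g :: l) = f g * eval f l :=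
  List.prod_cons

@[simp]
theorem eval_append (l k : List Letter) : eval f (l ++ k) = eval f l * eval f k := by
  simp [eval]

theorem eval_flatMap (s : Letter → List Letter) (l : List Letter) :
    eval f (l.flatMap s) = eval (fun g ↦ eval f (s g)) l := by
  induction l with
  | nil => rfl
  | cons g l ih => simp [ih]

theorem map_eval (φ : G →* H) (l : List Letter) : φ (eval f l) = eval (φ ∘ f) l := by
  simp [eval, map_list_prod]

end Eval

section Tree

/-- Whether a generator exchanges the two subtrees below the root of the binary tree. -/
def swaps : Letter → Bool
  | a => true
  | _ => false

/-- The action of a generator on the subtree below the vertex `i`: `b = (a, c)`, `c = (a, d)` and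
`d = (1, b)`. The value `none` stands for the trivial action. -/
def coord : Bool → Letter → Option Letter
  | _, a => none
  | false, b => some a
  | false, c => some a
  | false, d => none
  | true, b => some c
  | true, c => some d
  | true, d => some b

/-- The action of a generator on the vertices of the rooted binary tree. -/
def treeAct : Letter → List Bool → List Bool
  | _, [] => []
  | g, i :: v => (i ^^ swaps g) :: match coord i g with
    | none => v
    | some h => treeAct h v

theorem treeAct_involutive (g : Letter) : Function.Involutive (treeAct g) := by
  intro v
  induction v generalizing g with
  | nil => rfl
  | cons i v ih => cases i <;> cases g <;> simp [treeAct, swaps, coord, ih]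

/-- A generator as a permutation of the vertices of the rooted binary tree. -/
def treePerm (g : Letter) : Equiv.Perm (List Bool) :=
  (treeAct_involutive g).toPerm

/-- A word that represents the identity of the Grigorchuk group. -/
def IsTrivial (l : List Letter) : Prop :=
  eval treePerm l = 1

/-- The parity of the number of letters of a word that satisfy `p`. -/
def parity (p : Letter → Bool) : List Letter → Bool
  | [] => false
  | g :: l => p g ^^ parity p l

@[simp]
theorem parity_append (p : Letter → Bool) (l k : List Letter) :
    parity p (l ++ k) = (parity p l ^^ parity p k) := by
  induction l with
  | nil => simp [parity]
  | cons g l ih => simp [parity, ih]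

/-- The section of a word at a vertex of the first level. The index `s` is the vertex to which the
word sends the subtree in question, since words act from right to left. -/
def sec (s : Bool) : List Letter → List Letter
  | [] => []
  | g :: l => (coord s g).toList ++ sec (s ^^ swaps g) l

theorem eval_treePerm_cons (l : List Letter) (i : Bool) (v : List Bool) :
    eval treePerm l (i :: v) =
      (i ^^ parity swaps l) :: eval treePerm (sec (i ^^ parity swaps l) l) v := by
  induction l with
  | nil => simp [parity, sec]
  | cons g l ih =>
    have treePerm_cons (j : Bool) (w : List Bool) :
        treePerm g (j :: w) = (j ^^ swaps g) :: eval treePerm (coord j g).toList w := by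
      cases j <;> cases g <;> rfl
    have coord_eq (j : Bool) : coord (j ^^ swaps g) g = coord j g := by
      cases g <;> simp [swaps, coord]
    have index_eq : (i ^^ (swaps g ^^ parity swaps l)) = ((i ^^ parity swaps l) ^^ swaps g) := by
      simp [Bool.xor_comm]
    have swaps_cancel (j : Bool) : ((j ^^ swaps g) ^^ swaps g) = j := by simp
    simp only [eval_cons, eval_append, Equiv.Perm.mul_apply, ih, treePerm_cons, parity, sec,
      index_eq, coord_eq, swaps_cancel]

theorem isTrivial_iff {l : List Letter} :
    IsTrivial l ↔ parity swaps l = false ∧ ∀ s, IsTrivial (sec s l) := by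
  constructor
  · intro h
    have act (i : Bool) (v : List Bool) :
        (i ^^ parity swaps l) :: eval treePerm (sec (i ^^ parity swaps l) l) v = i :: v := by
      rw [← eval_treePerm_cons, h, Equiv.Perm.one_apply]
    have even : parity swaps l = false := by simpa using (List.cons.inj (act false [])).1
    exact ⟨even, fun s ↦ Equiv.ext fun v ↦ by simpa [even] using act s v⟩
  · rintro ⟨even, hsec⟩
    refine Equiv.ext fun v ↦ ?_
    cases v with
    | nil =>
      have fixes_root : ∀ k, eval treePerm k [] = [] := by
        intro k
        induction k with
        | nil => rfl
        | cons g k ih => simp [ih, treePerm, treeAct]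
      exact fixes_root l
    | cons i v => simp [eval_treePerm_cons, even, show eval treePerm (sec i l) = 1 from hsec i]

end Tree

section Parity

variable {l : List Letter}

/-- `q` is the parity that a letter contributes to the number of letters satisfying `p` in the two
sections of a word together. -/
def IsSectionParity (p q : Letter → Bool) : Prop :=
  ∀ g, q g = (parity p (coord false g).toList ^^ parity p (coord true g).toList)

instance (p q : Letter → Bool) : Decidable (IsSectionParity p q) :=
  inferInstanceAs (Decidable (∀ _, _))

theorem IsSectionParity.xor_parity_sec {p q : Letter → Bool} (h : IsSectionParity p q) (s : Bool)
    (l : List Letter) : (parity p (sec s l) ^^ parity p (sec (!s) l)) = parity q l := by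
  induction l generalizing s with
  | nil => rfl
  | cons g l ih =>
    have head : (parity p (coord s g).toList ^^ parity p (coord (!s) g).toList) = q g := by
      cases s <;> simp [h g, Bool.xor_comm]
    rw [parity, ← head, ← ih (s ^^ swaps g), sec, sec, parity_append, parity_append, Bool.not_xor]
    simp only [Bool.xor_assoc, Bool.xor_left_comm]

theorem IsSectionParity.parity_eq_false {p q : Letter → Bool} (h : IsSectionParity p q)
    (hp : ∀ l, IsTrivial l → parity p l = false) (hl : IsTrivial l) : parity q l = false := by
  have sections := (isTrivial_iff.1 hl).2
  rw [← h.xor_parity_sec false, hp _ (sections _), hp _ (sections _), Bool.xor_self]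

theorem IsTrivial.parity_swaps (h : IsTrivial l) : parity swaps l = false :=
  (isTrivial_iff.1 h).1

/-- The indicator function of `{b, c}`. -/
def isBC (g : Letter) : Bool := g = b ∨ g = c

/-- The indicator function of `{b, d}`. -/
def isBD (g : Letter) : Bool := g = b ∨ g = d

/-- The indicator function of `{c, d}`. -/
def isCD (g : Letter) : Bool := g = c ∨ g = d

theorem IsTrivial.parity_isBC (h : IsTrivial l) : parity isBC l = false :=
  (show IsSectionParity swaps isBC by decide).parity_eq_false (fun _ ↦ IsTrivial.parity_swaps) h

theorem IsTrivial.parity_isBD (h : IsTrivial l) : parity isBD l = false :=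
  (show IsSectionParity isBC isBD by decide).parity_eq_false (fun _ ↦ IsTrivial.parity_isBC) h

theorem IsTrivial.parity_isCD (h : IsTrivial l) : parity isCD l = false :=
  (show IsSectionParity isBD isCD by decide).parity_eq_false (fun _ ↦ IsTrivial.parity_isBD) h

end Parity

section Relations

variable {G H : Type*} [Group G] [Group H] {f : Letter → G}

/-- The relations of the presentation that do not involve the stable letter. -/
structure Relations (f : Letter → G) : Prop where
  mul_self : ∀ g, f g * f g = 1
  bcd : f b * f c * f d = 1
  ad_pow : (f a * f d) ^ 4 = 1
  adacac_pow : (f a * f d * f a * f c * f a * f c) ^ 4 = 1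

theorem mul_mul_mul_comm_of_mul_pow_four {x y : G} (hx : x * x = 1) (hy : y * y = 1)
    (hxy : (x * y) ^ 4 = 1) : x * (y * (x * y)) = y * (x * (y * x)) := by
  calc x * (y * (x * y)) = (x * y) ^ 2 := by simp [pow_two, mul_assoc]
    _ = ((x * y) ^ 2)⁻¹ := by rw [eq_inv_iff_mul_eq_one, ← pow_add, hxy]
    _ = y⁻¹ * (x⁻¹ * (y⁻¹ * x⁻¹)) := by simp [pow_two, mul_assoc]
    _ = y * (x * (y * x)) := by rw [inv_eq_of_mul_eq_one_left hx, inv_eq_of_mul_eq_one_left hy]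

namespace Relations

variable (h : Relations f)
include h

theorem map (φ : G →* H) : Relations (φ ∘ f) where
  mul_self g := by simp [← map_mul, h.mul_self]
  bcd := by simp [← map_mul, h.bcd]
  ad_pow := by simp [← map_mul, ← map_pow, h.ad_pow]
  adacac_pow := by simp [← map_mul, ← map_pow, h.adacac_pow]

omit h in
theorem of_injective {φ : G →* H} (hφ : Function.Injective φ) (h : Relations (φ ∘ f)) :
    Relations f where
  mul_self g := hφ (by simpa using h.mul_self g)
  bcd := hφ (by simpa using h.bcd)
  ad_pow := hφ (by simpa using h.ad_pow)
  adacac_pow := hφ (by simpa using h.adacac_pow)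

theorem mul_self_mul (g : Letter) (x : G) : f g * (f g * x) = x := by
  rw [← mul_assoc, h.mul_self, one_mul]

theorem inv_eq (g : Letter) : (f g)⁻¹ = f g :=
  inv_eq_of_mul_eq_one_left (h.mul_self g)

theorem bc : f b * f c = f d := by
  rw [eq_inv_of_mul_eq_one_left h.bcd, h.inv_eq]

theorem cb : f c * f b = f d := by
  rw [← h.inv_eq d, ← h.bc, mul_inv_rev, h.inv_eq, h.inv_eq]

theorem bd : f b * f d = f c := by
  rw [← h.bc, h.mul_self_mul]

theorem db : f d * f b = f c := by
  rw [← h.cb, mul_assoc, h.mul_self, mul_one]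

theorem cd : f c * f d = f b := by
  rw [← h.cb, h.mul_self_mul]

theorem dc : f d * f c = f b := by
  rw [← h.bc, mul_assoc, h.mul_self, mul_one]

theorem dada : f d * (f a * (f d * f a)) = f a * (f d * (f a * f d)) :=
  (mul_mul_mul_comm_of_mul_pow_four (h.mul_self a) (h.mul_self d) h.ad_pow).symm

end Relations

/-- The reduced form of the product of two letters, by `a² = 1` and the multiplication table of the
Klein four-group `{1, b, c, d}`. -/
def mulLetters : Letter → Letter → List Letter
  | a, a | b, b | c, c | d, d => []
  | b, c | c, b => [d]
  | b, d | d, b => [c]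
  | c, d | d, c => [b]
  | a, h => [a, h]
  | g, a => [g, a]

theorem Relations.eval_mulLetters (h : Relations f) (g g' : Letter) :
    eval f (mulLetters g g') = f g * f g' := by
  cases g <;> cases g' <;> simp [mulLetters, h.mul_self, h.bc, h.cb, h.bd, h.db, h.cd, h.dc]

end Relations

section Substitution

/-- The substitution `σ`. -/
def sigma : Letter → List Letter
  | a => [a, c, a]
  | b => [d]
  | c => [b]
  | d => [c]

/-- The letters of `sec false (sigma g)`, while `sec true (sigma g)` is `g`. All values lie in the
dihedral group of order eight generated by `a` and `d`. -/
def phi : Letter → List Letter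
  | a => [d]
  | b => []
  | c => [a]
  | d => [a]

/-- The normal forms `aˣ dʸ (adad)ᶻ` of the elements of the dihedral group generated by `a` and `d`,
indexed by the exponents `(x, y, z)`. -/
def dihedralNF (q : Bool × Bool × Bool) : List Letter :=
  (if q.1 then [a] else []) ++ (if q.2.1 then [d] else []) ++ (if q.2.2 then [a, d, a, d] else [])

/-- Left multiplication of dihedral normal forms by `phi g`. -/
def dihedralStep : Letter → Bool × Bool × Bool → Bool × Bool × Bool
  | a, (x, y, z) => (x, !y, z ^^ x)
  | b, q => q
  | c, (x, y, z) | d, (x, y, z) => (!x, y, z)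

theorem Relations.eval_phi_mul_dihedralNF {G : Type*} [Group G] {f : Letter → G}
    (h : Relations f) (g : Letter) (q : Bool × Bool × Bool) :
    eval f (phi g) * eval f (dihedralNF q) = eval f (dihedralNF (dihedralStep g q)) := by
  have dada_mul (x : G) :
      f d * (f a * (f d * (f a * x))) = f a * (f d * (f a * (f d * x))) := by
    simpa only [mul_assoc] using congrArg (· * x) h.dada
  obtain ⟨_ | _, _ | _, _ | _⟩ := q <;> cases g <;>
    simp [phi, dihedralNF, dihedralStep, h.mul_self, h.mul_self_mul, h.dada, dada_mul]

theorem foldr_dihedralStep (l : List Letter) : l.foldr dihedralStep (false, false, false) =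
    (parity isCD l, parity swaps l, parity isBD (sec false l)) := by
  induction l with
  | nil => rfl
  | cons g l ih =>
    have sections : (parity isBD (sec false l) ^^ parity isBD (sec true l)) = parity isCD l :=
      (show IsSectionParity isBD isCD by decide).xor_parity_sec false l
    rw [List.foldr_cons, ih]
    cases g <;> simp [dihedralStep, parity, sec, coord, swaps, isCD, isBD, ← sections]

theorem IsTrivial.foldr_dihedralStep {l : List Letter} (hl : IsTrivial l) :
    l.foldr dihedralStep (false, false, false) = (false, false, false) := by
  rw [Grigorchuk.foldr_dihedralStep, hl.parity_isCD, hl.parity_swaps,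
    ((isTrivial_iff.1 hl).2 false).parity_isBD]

theorem Relations.eval_flatMap_phi {G : Type*} [Group G] {f : Letter → G} (h : Relations f)
    {l : List Letter} (hl : IsTrivial l) : eval f (l.flatMap phi) = 1 := by
  have (k : List Letter) : eval f (k.flatMap phi) =
      eval f (dihedralNF (k.foldr dihedralStep (false, false, false))) := by
    induction k with
    | nil => rfl
    | cons g k ih =>
      rw [List.flatMap_cons, eval_append, ih, h.eval_phi_mul_dihedralNF, List.foldr_cons]
  rw [this, hl.foldr_dihedralStep]
  rfl

end Substitution

section TreeRelations

theorem treeAct_bcd (v : List Bool) : treeAct b (treeAct c (treeAct d v)) = v ∧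
    treeAct c (treeAct d (treeAct b v)) = v ∧ treeAct d (treeAct b (treeAct c v)) = v := by
  induction v with
  | nil => simp [treeAct]
  | cons i v ih => cases i <;> simp [treeAct, swaps, coord, ih, treeAct_involutive a v]

theorem relations_treePerm : Relations treePerm := by
  have mul_self (g : Letter) : treePerm g * treePerm g = 1 := Equiv.ext (treeAct_involutive g)
  have mul_self_mul (g : Letter) (x : Equiv.Perm (List Bool)) :
      treePerm g * (treePerm g * x) = x := by
    rw [← mul_assoc, mul_self, one_mul]
  have trivial_ad : IsTrivial [a, d, a, d, a, d, a, d] := by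
    refine isTrivial_iff.2 ⟨rfl, ?_⟩
    rintro (_ | _) <;> simp [sec, coord, swaps, IsTrivial, mul_self]
  have trivial_adacac : IsTrivial
      [a, d, a, c, a, c, a, d, a, c, a, c, a, d, a, c, a, c, a, d, a, c, a, c] := by
    refine isTrivial_iff.2 ⟨rfl, ?_⟩
    rintro (_ | _) <;> simp [sec, coord, swaps, IsTrivial, mul_self, mul_self_mul]
  exact
    { mul_self
      bcd := Equiv.ext fun v ↦ (treeAct_bcd v).1
      ad_pow := by simpa [IsTrivial, pow_succ, mul_assoc] using trivial_ad
      adacac_pow := by simpa [IsTrivial, pow_succ, mul_assoc] using trivial_adacac }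

theorem isTrivial_flatMap_sigma_iff {l : List Letter} :
    IsTrivial (l.flatMap sigma) ↔ IsTrivial l := by
  have parity_sigma (k : List Letter) : parity swaps (k.flatMap sigma) = false := by
    induction k with
    | nil => rfl
    | cons g k ih => cases g <;> simp [sigma, parity, swaps, ih]
  have sec_true (k : List Letter) : sec true (k.flatMap sigma) = k := by
    induction k with
    | nil => rfl
    | cons g k ih => cases g <;> simp [sigma, sec, swaps, coord, ih]
  have sec_false (k : List Letter) : sec false (k.flatMap sigma) = k.flatMap phi := by
    induction k with
    | nil => rfl
    | cons g k ih => cases g <;> simp [sigma, phi, sec, swaps, coord, ih]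
  rw [isTrivial_iff, Bool.forall_bool, sec_true, sec_false]
  exact ⟨fun hl ↦ hl.2.2,
    fun hl ↦ ⟨parity_sigma l, relations_treePerm.eval_flatMap_phi hl, hl⟩⟩

end TreeRelations

section StableLetter

variable {G : Type*} [Group G] {f : Letter → G} {t : G}

/-- The relations of the presentation of `Γ_t`, with `t` as the value of the stable letter. -/
structure HNNRelations (f : Letter → G) (t : G) : Prop extends Relations f where
  conj : ∀ g, t * f g * t⁻¹ = eval f (sigma g)

/-- The conjugates of `b` under the dihedral group generated by `a` and `d`. -/
inductive BConjugate
  | b | aba | dabad | adabada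

namespace BConjugate

instance : Finite BConjugate :=
  Set.finite_univ_iff.1 (Set.Finite.subset
    (Set.toFinite {b, aba, dabad, adabada}) (by rintro (_ | _ | _ | _) - <;> simp))

/-- The spelling of a conjugate of `b`. -/
def word : BConjugate → List Letter
  | b => [.b]
  | aba => [.a, .b, .a]
  | dabad => [.d, .a, .b, .a, .d]
  | adabada => [.a, .d, .a, .b, .a, .d, .a]

/-- Conjugation by `phi g`. -/
def move : Letter → BConjugate → BConjugate
  | .a, aba => dabad
  | .a, dabad => aba
  | .a, s => s
  | .b, s => s
  | .c, b | .d, b => aba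
  | .c, aba | .d, aba => b
  | .c, dabad | .d, dabad => adabada
  | .c, adabada | .d, adabada => dabad

end BConjugate

theorem Relations.eval_phi_mul_eval_word (h : Relations f) (g : Letter) (s : BConjugate) :
    eval f (phi g) * eval f s.word = eval f (s.move g).word * eval f (phi g) := by
  have ad_mul (x : G) : f a * (f d * (f a * (f d * x))) = f d * (f a * (f d * (f a * x))) := by
    simpa only [mul_assoc] using congrArg (· * x) h.dada.symm
  have d_commute_b (x : G) : f d * (f b * x) = f b * (f d * x) := by
    rw [← mul_assoc, ← mul_assoc, h.db, h.bd]
  have d_commute_adabada : f d * (f a * (f d * (f a * (f b * (f a * (f d * f a)))))) =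
      f a * (f d * (f a * (f b * (f a * (f d * (f a * f d)))))) := by
    rw [← h.dada, ← d_commute_b, ad_mul]
  cases g <;> cases s <;>
    simp [phi, BConjugate.word, BConjugate.move, mul_assoc, h.mul_self, h.mul_self_mul, h.db, h.bd,
      d_commute_adabada]

namespace HNNRelations

variable (h : HNNRelations f t)
include h

theorem conj_mul_apply (g : Letter) :
    MulAut.conj (f a * t) (f g) = f a * eval f (sigma g) * f a := by
  rw [← h.conj, MulAut.conj_apply, mul_inv_rev, h.inv_eq]
  simp only [mul_assoc]

theorem conj_mul_apply_a : MulAut.conj (f a * t) (f a) = f c := by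
  rw [h.conj_mul_apply]
  simp [sigma, mul_assoc, h.mul_self, h.mul_self_mul]

theorem commute_d_conj_eval_word (s : BConjugate) :
    Commute (f d) (MulAut.conj (f a * t) (eval f s.word)) := by
  have commute_c : Commute (f d) (f c) := h.dc.trans h.cd.symm
  have commute_ada : Commute (f d) (f a * f d * f a) := by
    simpa [Commute, SemiconjBy, mul_assoc] using h.dada
  have commute_acacadacaca : Commute (f d)
      (f a * f c * f a * f c * (f a * f d * f a) * f c * (f a * f c * f a)) := by
    have := mul_mul_mul_comm_of_mul_pow_four
      (x := f a * f d * f a) (y := f c * f a * f c)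
      (by simp [mul_assoc, h.mul_self, h.mul_self_mul])
      (by simp [mul_assoc, h.mul_self, h.mul_self_mul])
      (by simpa [mul_assoc] using h.adacac_pow)
    simpa [Commute, SemiconjBy, mul_assoc, h.mul_self, h.mul_self_mul] using
      congrArg (f a * · * f a) this
  cases s <;> simp only [BConjugate.word, eval_cons, eval_nil, mul_one, sigma,
    map_mul (MulAut.conj (f a * t)), h.conj_mul_apply_a, h.conj_mul_apply b, h.conj_mul_apply d]
  · exact commute_ada
  · exact commute_c.mul_right (commute_ada.mul_right commute_c)
  · simpa only [mul_assoc] using commute_acacadacaca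
  · simpa only [mul_assoc] using
      commute_c.mul_right (commute_acacadacaca.mul_right commute_c)

theorem exists_conj_eq_mul_conj_eval_phi (g : Letter) : ∃ e : ℕ,
    t * f g * t⁻¹ = f d ^ e * MulAut.conj (f a * t) (eval f (phi g)) := by
  rw [h.conj]
  cases g
  · use 0
    simp only [phi, sigma, eval_cons, eval_nil, mul_one, h.conj_mul_apply, pow_zero, one_mul,
      mul_assoc]
  · use 1
    simp only [phi, sigma, eval_cons, eval_nil, mul_one, map_one, pow_one]
  · use 1
    simp only [phi, sigma, eval_cons, eval_nil, mul_one, h.conj_mul_apply_a, pow_one, h.dc]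
  · use 0
    simp only [phi, sigma, eval_cons, eval_nil, mul_one, h.conj_mul_apply_a, pow_zero, one_mul]

theorem conj_mul_conj_eval_word (g : Letter) (s : BConjugate) :
    t * f g * t⁻¹ * MulAut.conj (f a * t) (eval f s.word) =
      MulAut.conj (f a * t) (eval f (s.move g).word) * (t * f g * t⁻¹) := by
  obtain ⟨e, he⟩ := h.exists_conj_eq_mul_conj_eval_phi g
  rw [he, mul_assoc, ← map_mul, h.eval_phi_mul_eval_word, map_mul, ← mul_assoc, ← mul_assoc]
  congr 1
  exact (h.commute_d_conj_eval_word (s.move g)).pow_left e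

end HNNRelations

end StableLetter

section Presentation

/-- The inclusion of the four generators of `Γ` into the five of `Γ_t`. -/
def Letter.toL5 : Letter → L5
  | a => .a
  | b => .b
  | c => .c
  | d => .d

/-- A generator of `Γ` as an element of the free group `F₅`. -/
def gen (g : Letter) : F5 :=
  FreeGroup.of g.toL5

/-- The group `Γ_t`. -/
abbrev GammaT : Type :=
  PresentedGroup Rt

theorem hnnRelations_mk : HNNRelations (PresentedGroup.mk Rt ∘ gen) (PresentedGroup.mk Rt gt) := by
  have mk_eq_one {W : F5} (hW : W ∈ Rt) : PresentedGroup.mk Rt W = 1 :=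
    PresentedGroup.one_of_mem hW
  have gen_eq : gen a = ga ∧ gen b = gb ∧ gen c = gc ∧ gen d = gd := ⟨rfl, rfl, rfl, rfl⟩
  refine ⟨⟨?_, ?_, ?_, ?_⟩, ?_⟩
  · rintro (_ | _ | _ | _) <;> simp only [Function.comp_apply, ← pow_two] <;>
      exact mk_eq_one (by simp [Rt, gen_eq])
  · exact mk_eq_one (by simp [Rt, gen_eq])
  · exact mk_eq_one (by simp [Rt, gen_eq])
  · exact mk_eq_one (by simp [Rt, gen_eq])
  · rintro (_ | _ | _ | _) <;> rw [← map_eval] <;>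
      exact PresentedGroup.mk_eq_mk_of_mul_inv_mem
        (by simp [Rt, RHNN, sigma, gen_eq, mul_assoc])

theorem HNNRelations.exists_hom {G : Type*} [Group G] {f : Letter → G} {t : G}
    (h : HNNRelations f t) : ∃ φ : GammaT →* G,
      (∀ l, φ (PresentedGroup.mk Rt (eval gen l)) = eval f l) ∧
        φ (PresentedGroup.mk Rt gt) = t := by
  let u : L5 → G
    | .a => f a
    | .b => f b
    | .c => f c
    | .d => f d
    | .t => t
  have lift_ga : FreeGroup.lift u ga = f a := FreeGroup.lift_apply_of
  have lift_gb : FreeGroup.lift u gb = f b := FreeGroup.lift_apply_of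
  have lift_gc : FreeGroup.lift u gc = f c := FreeGroup.lift_apply_of
  have lift_gd : FreeGroup.lift u gd = f d := FreeGroup.lift_apply_of
  have lift_gt : FreeGroup.lift u gt = t := FreeGroup.lift_apply_of
  have lift_eq_one : ∀ r ∈ Rt, FreeGroup.lift u r = 1 := by
    rintro r ((rfl | rfl | rfl | rfl | rfl | rfl | rfl) | (rfl | rfl | rfl | rfl)) <;>
      simp only [map_mul, map_pow, map_inv, lift_ga, lift_gb, lift_gc, lift_gd, lift_gt, h.conj]
    any_goals simp [pow_two, sigma, h.mul_self, mul_assoc]; done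
    · exact h.bcd
    · exact h.ad_pow
    · exact h.adacac_pow
  refine ⟨PresentedGroup.toGroup lift_eq_one, fun l ↦ ?_, lift_gt⟩
  refine (map_eval gen (FreeGroup.lift u) l).trans (congrArg (eval · l) (funext ?_))
  rintro (_ | _ | _ | _) <;> exact FreeGroup.lift_apply_of

end Presentation

section Faithful

universe u

theorem exists_conj_eq_map_of_injective {Γ : Type u} [Group Γ] {θ : Γ →* Γ}
    (hθ : Function.Injective θ) : ∃ (H : Type u) (_ : Group H) (ι : Γ →* H) (t : H),
      Function.Injective ι ∧ ∀ x, t * ι x * t⁻¹ = ι (θ x) := by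
  let e : (⊤ : Subgroup Γ) ≃* θ.range := Subgroup.topEquiv.trans (MonoidHom.ofInjective hθ)
  exact ⟨HNNExtension Γ ⊤ θ.range e, inferInstance, HNNExtension.of, HNNExtension.t,
    HNNExtension.of_injective e, fun x ↦ (HNNExtension.equiv_eq_conj (φ := e) ⟨x, trivial⟩).symm⟩

theorem lift_mk_eq_prod_map_of_mul_self {α G : Type*} [Group G] {u : α → G}
    (hu : ∀ x, u x * u x = 1) (L : List (α × Bool)) :
    FreeGroup.lift u (FreeGroup.mk L) = ((L.map Prod.fst).map u).prod := by
  rw [FreeGroup.lift_mk, List.map_map]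
  congr 2
  funext ⟨x, ε⟩
  cases ε <;> simp [inv_eq_of_mul_eq_one_left (hu x)]

/-- The action of the free group on the letters `a, b, c, d` on the binary tree. -/
def treeHom : FreeGroup Letter →* Equiv.Perm (List Bool) :=
  FreeGroup.lift treePerm

/-- The substitution `σ` as an endomorphism of the free group. -/
def sigmaHom : FreeGroup Letter →* FreeGroup Letter :=
  FreeGroup.lift fun g ↦ eval FreeGroup.of (sigma g)

theorem treeHom_sigmaHom_eq_one_iff {x : FreeGroup Letter} :
    treeHom (sigmaHom x) = 1 ↔ treeHom x = 1 := by
  have mul_self := relations_treePerm.mul_self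
  have comp_eq : treeHom.comp sigmaHom = FreeGroup.lift fun g ↦ eval treePerm (sigma g) := by
    ext1 g
    simp [treeHom, sigmaHom, map_eval, Function.comp_def]
  have sigma_mul_self (g : Letter) :
      eval treePerm (sigma g) * eval treePerm (sigma g) = 1 := by
    cases g <;> simp [sigma, mul_assoc, mul_self, relations_treePerm.mul_self_mul]
  obtain ⟨L, rfl⟩ := Quot.exists_rep x
  change treeHom.comp sigmaHom (FreeGroup.mk L) = 1 ↔ treeHom (FreeGroup.mk L) = 1
  rw [comp_eq, lift_mk_eq_prod_map_of_mul_self sigma_mul_self, treeHom,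
    lift_mk_eq_prod_map_of_mul_self mul_self]
  change eval _ _ = 1 ↔ IsTrivial _
  rw [← isTrivial_flatMap_sigma_iff, IsTrivial, eval_flatMap]

theorem isTrivial_of_mk_eval_eq_one {l : List Letter}
    (hl : PresentedGroup.mk Rt (eval gen l) = 1) : IsTrivial l := by
  let θ : FreeGroup Letter ⧸ treeHom.ker →* FreeGroup Letter ⧸ treeHom.ker :=
    QuotientGroup.map _ _ sigmaHom fun x hx ↦ treeHom_sigmaHom_eq_one_iff.2 hx
  have injective_θ : Function.Injective θ := by
    refine (injective_iff_map_eq_one θ).2 fun x hx ↦ ?_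
    induction x using QuotientGroup.induction_on with
    | H x =>
      exact (QuotientGroup.eq_one_iff x).2
        (treeHom_sigmaHom_eq_one_iff.1 ((QuotientGroup.eq_one_iff (sigmaHom x)).1 hx))
  obtain ⟨H, _, ι, t, injective_ι, conj⟩ := exists_conj_eq_map_of_injective injective_θ
  let π : Letter → FreeGroup Letter ⧸ treeHom.ker := fun g ↦ QuotientGroup.mk (FreeGroup.of g)
  have kerLift_comp : QuotientGroup.kerLift treeHom ∘ π = treePerm :=
    funext fun g ↦ FreeGroup.lift_apply_of
  have relations_π : Relations π := by
    refine .of_injective (QuotientGroup.kerLift_injective treeHom) ?_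
    rw [kerLift_comp]
    exact relations_treePerm
  have hnn : HNNRelations (ι ∘ π) t := by
    refine ⟨relations_π.map ι, fun g ↦ (conj (π g)).trans ?_⟩
    have θ_π : θ (π g) = QuotientGroup.mk' _ (eval FreeGroup.of (sigma g)) :=
      congrArg (QuotientGroup.mk' _) FreeGroup.lift_apply_of
    rw [← map_eval, θ_π, map_eval]
    rfl
  obtain ⟨φ, hφ, -⟩ := hnn.exists_hom
  have eval_π : eval π l = 1 := by
    apply injective_ι
    rw [map_eval, ← hφ, hl, map_one, map_one]
  rw [IsTrivial, ← kerLift_comp, ← map_eval, eval_π, map_one]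

end Faithful

section Reduction

/-- Multiplication of a word by a letter on the left, followed by reduction at the front. -/
def consReduce (g : Letter) : List Letter → List Letter
  | [] => [g]
  | g' :: l => mulLetters g g' ++ l

/-- A word for the same element in which `a` alternates with `b, c, d`. -/
def reduce (l : List Letter) : List Letter :=
  l.foldr consReduce []

theorem Relations.eval_reduce {G : Type*} [Group G] {f : Letter → G} (h : Relations f)
    (l : List Letter) : eval f (reduce l) = eval f l := by
  have eval_consReduce (g : Letter) (k : List Letter) :
      eval f (consReduce g k) = f g * eval f k := by
    cases k <;> simp [consReduce, h.eval_mulLetters, mul_assoc]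
  induction l with
  | nil => rfl
  | cons g l ih => rw [eval_cons, ← ih, ← eval_consReduce, reduce, reduce, List.foldr_cons]

theorem length_reduce_le (l : List Letter) : (reduce l).length ≤ l.length := by
  have length_consReduce_le (g : Letter) (k : List Letter) :
      (consReduce g k).length ≤ k.length + 1 := by
    obtain _ | ⟨g', k⟩ := k
    · rfl
    · cases g <;> cases g' <;> simp [consReduce, mulLetters] <;> lia
  induction l with
  | nil => rfl
  | cons g l ih => exact (length_consReduce_le g _).trans (Nat.succ_le_succ ih)

theorem isChain_map_swaps_reduce (l : List Letter) : ((reduce l).map swaps).IsChain (· ≠ ·) := by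
  have consReduce_isChain (g : Letter) (k : List Letter) (hk : (k.map swaps).IsChain (· ≠ ·)) :
      ((consReduce g k).map swaps).IsChain (· ≠ ·) := by
    obtain _ | ⟨g', k⟩ := k
    · simp [consReduce]
    · cases g <;> cases g' <;> simp_all [consReduce, mulLetters, swaps, List.isChain_cons]
  induction l with
  | nil => simp [reduce]
  | cons g l ih => exact consReduce_isChain g _ ih

theorem length_sec_le_count (s : Bool) (l : List Letter) :
    (sec s l).length ≤ (l.map swaps).count false := by
  induction l generalizing s with
  | nil => simp [sec]
  | cons g l ih =>
    have := ih (s ^^ swaps g)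
    cases s <;> cases g <;> simp_all [sec, coord, swaps, Nat.le_succ_of_le]

theorem two_mul_length_sec_reduce_le (s : Bool) (l : List Letter) :
    2 * (sec s (reduce l)).length ≤ l.length + 1 := by
  have count_le := (isChain_map_swaps_reduce l).two_mul_count_bool_le_length_add_one false
  rw [List.length_map] at count_le
  have := length_sec_le_count s (reduce l)
  have := length_reduce_le l
  lia

theorem IsTrivial.reduce {l : List Letter} (hl : IsTrivial l) : IsTrivial (reduce l) :=
  (relations_treePerm.eval_reduce l).trans hl

theorem IsTrivial.eq_nil_of_length_le_one {l : List Letter} (hl : IsTrivial l)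
    (hlen : l.length ≤ 1) : l = [] := by
  match l, hlen with
  | [], _ => rfl
  | [a], _ => exact absurd hl.parity_swaps (by decide)
  | [b], _ => exact absurd hl.parity_isBC (by decide)
  | [c], _ => exact absurd hl.parity_isBC (by decide)
  | [d], _ => exact absurd hl.parity_isBD (by decide)

theorem exists_areaEq_reduce :
    ∃ c, ∀ l, AreaEq Rt (c * l.length) (eval gen l) (eval gen (reduce l)) := by
  obtain ⟨c, hc⟩ := exists_forall_areaEq (R := Rt) (ι := Letter × Letter)
    (u := fun p ↦ gen p.1 * gen p.2) (v := fun p ↦ eval gen (mulLetters p.1 p.2)) fun p ↦ by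
      have := (hnnRelations_mk.eval_mulLetters p.1 p.2).symm
      rwa [← map_eval] at this
  have consReduce_step (g : Letter) (k : List Letter) :
      AreaEq Rt c (gen g * eval gen k) (eval gen (consReduce g k)) := by
    obtain _ | ⟨g', k⟩ := k
    · exact (AreaEq.of_eq rfl).mono c.zero_le
    · simpa [consReduce, mul_assoc] using (hc (g, g')).mul_right (eval gen k)
  refine ⟨c, fun l ↦ ?_⟩
  simpa only [eval, reduce, List.map_nil, List.prod_nil, mul_one] using
    AreaEq.prod_map_mul_foldr consReduce_step l []

end Reduction

section Splitting

/-- The factor `b` by which `coord s g` differs from `phi` applied to `coord (!s) g`, as a list of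
length at most one. -/
def bHead (s : Bool) (g : Letter) : List BConjugate :=
  if s && isBD g then [.b] else []

/-- The conjugates of `b` by which `sec s l` differs from `phi` applied to `sec (!s) l`, once they
are collected on the left. -/
def bPart (s : Bool) : List Letter → List BConjugate
  | [] => []
  | g :: l => bHead s g ++
      (bPart (s ^^ swaps g) l).map ((coord (!s) g).elim id BConjugate.move)

theorem length_bPart_le (s : Bool) (l : List Letter) : (bPart s l).length ≤ l.length := by
  induction l generalizing s with
  | nil => rfl
  | cons g l ih =>
    have length_bHead_le : (bHead s g).length ≤ 1 := by
      unfold bHead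
      split <;> simp
    rw [bPart, List.length_append, List.length_map, List.length_cons, add_comm]
    gcongr
    exact ih _

-- Carrying each new factor `P` past the conjugates already collected costs linear area, so the
-- whole collection costs quadratic area.
theorem areaEq_bPart_mul_sec {G : Type*} [Group G] {R : Set G} {c : ℕ} {P : Letter → G}
    {B : BConjugate → G} {E : Bool → List Letter → G}
    (push : ∀ g x, AreaEq R c (P g * B x) (B (x.move g) * P g))
    (E_nil : ∀ s, E s [] = 1)
    (E_cons : ∀ s g l, AreaEq R c (E s (g :: l))
      (((bHead s g).map B).prod * eval P (coord (!s) g).toList * E (s ^^ swaps g) l))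
    (s : Bool) (l : List Letter) : AreaEq R (c * l.length ^ 2) (E s l)
      (((bPart s l).map B).prod * eval P (sec (!s) l)) := by
  induction l generalizing s with
  | nil => exact .of_eq (by simp [E_nil, bPart, sec])
  | cons g l ih =>
    set S := bPart (s ^^ swaps g) l with hS
    set Q := eval P (sec (!(s ^^ swaps g)) l) with hQ
    set move := (coord (!s) g).elim id BConjugate.move with hmove
    have push_coord (x : BConjugate) : AreaEq R c
        (eval P (coord (!s) g).toList * B x) (B (move x) * eval P (coord (!s) g).toList) := by
      rw [hmove]
      cases coord (!s) g with
      | none => exact (AreaEq.of_eq (by simp)).mono c.zero_le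
      | some g' => simpa using push g' x
    have collected := (AreaEq.mul_prod_map push_coord S).mul_right Q
    have expanded := (E_cons s g l).trans ((ih (s ^^ swaps g)).mul_left _)
    have total := (expanded.trans (.of_eq (mul_assoc _ _ _))).trans
      ((AreaEq.of_eq (mul_assoc _ _ _).symm).trans collected |>.mul_left ((bHead s g).map B).prod)
    refine (total.trans (.of_eq ?_)).mono ?_
    · simp only [bPart, sec, eval_append, List.map_append, List.map_map, List.prod_append,
        mul_assoc, Bool.not_xor, Function.comp_def, hQ, hS, hmove]
    · calc c + c * l.length ^ 2 + 0 + (0 + c * S.length) + 0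
          ≤ c + c * l.length ^ 2 + c * l.length := by
            simpa using Nat.mul_le_mul_left c (length_bPart_le _ l)
        _ ≤ c * (g :: l).length ^ 2 := by rw [List.length_cons]; lia

end Splitting

section Decomposition

theorem map_conj_apply {G H : Type*} [Group G] [Group H] (φ : G →* H) (x y : G) :
    φ (MulAut.conj x y) = MulAut.conj (φ x) (φ y) := by
  simp only [MulAut.conj_apply, map_mul, map_inv]

theorem HNNRelations.mul_eq_prod_bHead_mul {G : Type*} [Group G] {f : Letter → G} {t : G}
    (h : HNNRelations f t) (s : Bool) (g : Letter) :
    (if s then f a else 1) * f g =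
      ((bHead s g).map fun x ↦ MulAut.conj (f a * t) (eval f x.word)).prod *
        eval (fun g ↦ t * f g * t⁻¹) (coord (!s) g).toList *
          (if s ^^ swaps g then f a else 1) := by
  have conj_b : MulAut.conj (f a * t) (f b) = f a * f d * f a := by
    rw [h.conj_mul_apply, sigma, eval_cons, eval_nil, mul_one]
  cases s <;> cases g <;> simp [-map_mul, -MulAut.conj_apply, bHead, coord, swaps, isBD, conj_b,
    h.conj, sigma, h.mul_self, h.mul_self_mul, BConjugate.word, mul_assoc, h.dc]

theorem Relations.eval_coord_eq_prod_bHead_mul {G : Type*} [Group G] {f : Letter → G}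
    (h : Relations f) (s : Bool) (g : Letter) : eval f (coord s g).toList =
      ((bHead s g).map fun x ↦ eval f x.word).prod *
        eval (fun g ↦ eval f (phi g)) (coord (!s) g).toList := by
  cases s <;> cases g <;> simp [bHead, coord, isBD, BConjugate.word, phi, h.bd]

theorem exists_areaEq_prod_bPart_mul_conj_sec :
    ∃ c, ∀ l, parity swaps l = false → AreaEq Rt (c * l.length ^ 2) (eval gen l)
      (((bPart false l).map fun x ↦ MulAut.conj (gen a * gt) (eval gen x.word)).prod *
        MulAut.conj gt (eval gen (sec true l))) := by
  have h := hnnRelations_mk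
  let A (s : Bool) : F5 := if s then gen a else 1
  let P (g : Letter) : F5 := gt * gen g * gt⁻¹
  let B (x : BConjugate) : F5 := MulAut.conj (gen a * gt) (eval gen x.word)
  obtain ⟨c₁, push⟩ := exists_forall_areaEq (R := Rt) (ι := Letter × BConjugate)
    (u := fun i ↦ P i.1 * B i.2) (v := fun i ↦ B (i.2.move i.1) * P i.1) fun i ↦ by
      change PresentedGroup.mk Rt _ = PresentedGroup.mk Rt _
      simpa only [P, B, map_mul (PresentedGroup.mk Rt), map_inv, map_conj_apply, map_eval,
        Function.comp_apply] using h.conj_mul_conj_eval_word i.1 i.2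
  obtain ⟨c₂, split⟩ := exists_forall_areaEq (R := Rt) (ι := Bool × Letter)
    (u := fun i ↦ A i.1 * gen i.2) (v := fun i ↦ ((bHead i.1 i.2).map B).prod *
      eval P (coord (!i.1) i.2).toList * A (i.1 ^^ swaps i.2)) fun ⟨s, g⟩ ↦ by
      change PresentedGroup.mk Rt _ = PresentedGroup.mk Rt _
      simpa only [P, A, B, map_mul (PresentedGroup.mk Rt), map_inv, map_conj_apply, map_eval,
        map_list_prod, List.map_map, apply_ite (PresentedGroup.mk Rt), map_one,
        Function.comp_def] using h.mul_eq_prod_bHead_mul s g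
  refine ⟨max c₁ c₂, fun l hl ↦ ?_⟩
  have := areaEq_bPart_mul_sec (R := Rt) (c := max c₁ c₂) (P := P) (B := B)
    (E := fun s l ↦ A s * eval gen l * (A (s ^^ parity swaps l))⁻¹)
    (fun g x ↦ (push (g, x)).mono (le_max_left _ _)) (fun s ↦ by simp [parity])
    (fun s g l ↦ ?_) false l
  · have eval_P : MulAut.conj gt (eval gen (sec true l)) = eval P (sec true l) :=
      map_eval gen (MulAut.conj gt).toMonoidHom _
    rw [eval_P]
    simpa only [A, hl, Bool.xor_false, Bool.false_eq_true, if_false, one_mul, inv_one, mul_one,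
      Bool.not_false] using this
  · have := ((split (s, g)).mul_right (eval gen l * (A (s ^^ parity swaps (g :: l)))⁻¹)).mono
      (le_max_right c₁ c₂)
    simpa [parity, mul_assoc] using this

theorem exists_areaEq_flatMap_phi :
    ∃ c, ∀ l, IsTrivial l → AreaEq Rt (c * l.length) (eval gen (l.flatMap phi)) 1 := by
  obtain ⟨c, step⟩ := exists_forall_areaEq (R := Rt) (ι := Letter × (Bool × Bool × Bool))
    (u := fun i ↦ eval gen (phi i.1) * eval gen (dihedralNF i.2))
    (v := fun i ↦ eval gen (dihedralNF (dihedralStep i.1 i.2))) fun i ↦ by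
      change PresentedGroup.mk Rt _ = PresentedGroup.mk Rt _
      simpa only [map_mul, map_eval] using hnnRelations_mk.eval_phi_mul_dihedralNF i.1 i.2
  refine ⟨c, fun l hl ↦ ?_⟩
  have := AreaEq.prod_map_mul_foldr (u := fun g ↦ eval gen (phi g))
    (N := fun q ↦ eval gen (dihedralNF q)) (fun g q ↦ step (g, q)) l (false, false, false)
  rw [hl.foldr_dihedralStep] at this
  rw [eval_flatMap]
  simpa [dihedralNF, eval] using this

theorem exists_areaEq_sec_prod_bPart :
    ∃ c, ∀ l, IsTrivial l → AreaEq Rt (c * l.length ^ 2) (eval gen (sec false l))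
      ((bPart false l).map fun x ↦ eval gen x.word).prod := by
  have h := hnnRelations_mk
  obtain ⟨c₁, push⟩ := exists_forall_areaEq (R := Rt) (ι := Letter × BConjugate)
    (u := fun i ↦ eval gen (phi i.1) * eval gen i.2.word)
    (v := fun i ↦ eval gen (i.2.move i.1).word * eval gen (phi i.1)) fun i ↦ by
      change PresentedGroup.mk Rt _ = PresentedGroup.mk Rt _
      simpa only [map_mul, map_eval] using h.eval_phi_mul_eval_word i.1 i.2
  obtain ⟨c₂, split⟩ := exists_forall_areaEq (R := Rt) (ι := Bool × Letter)
    (u := fun i ↦ eval gen (coord i.1 i.2).toList)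
    (v := fun i ↦ ((bHead i.1 i.2).map fun x ↦ eval gen x.word).prod *
      eval (fun g ↦ eval gen (phi g)) (coord (!i.1) i.2).toList) fun ⟨s, g⟩ ↦ by
      change PresentedGroup.mk Rt _ = PresentedGroup.mk Rt _
      simpa only [map_mul, map_eval, map_list_prod, List.map_map, Function.comp_def]
        using h.eval_coord_eq_prod_bHead_mul s g
  obtain ⟨c₃, phi_part⟩ := exists_areaEq_flatMap_phi
  refine ⟨max c₁ c₂ + c₃, fun l hl ↦ ?_⟩
  have collected := areaEq_bPart_mul_sec (R := Rt) (c := max c₁ c₂)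
    (P := fun g ↦ eval gen (phi g)) (B := fun x ↦ eval gen x.word)
    (E := fun s l ↦ eval gen (sec s l))
    (fun g x ↦ (push (g, x)).mono (le_max_left _ _)) (fun s ↦ rfl)
    (fun s g l ↦ by
      simpa [sec] using ((split (s, g)).mono (le_max_right c₁ c₂)).mul_right
        (eval gen (sec (s ^^ swaps g) l))) false l
  have removed := (phi_part _ ((isTrivial_iff.1 hl).2 true)).mul_left
    ((bPart false l).map fun x ↦ eval gen x.word).prod
  rw [eval_flatMap, mul_one] at removed
  refine (collected.trans removed).mono ?_
  have length_sec_le := (length_sec_le_count true l).trans List.count_le_length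
  rw [List.length_map] at length_sec_le
  rw [add_mul]
  gcongr
  exact length_sec_le.trans (Nat.le_self_pow two_ne_zero _)

theorem exists_areaEq_conj_sec_mul_conj_sec :
    ∃ c, ∀ l, IsTrivial l → AreaEq Rt (c * l.length ^ 2) (eval gen l)
      (MulAut.conj (gen a * gt) (eval gen (sec false l)) *
        MulAut.conj gt (eval gen (sec true l))) := by
  obtain ⟨c₁, split⟩ := exists_areaEq_prod_bPart_mul_conj_sec
  obtain ⟨c₂, collect⟩ := exists_areaEq_sec_prod_bPart
  refine ⟨c₁ + c₂, fun l hl ↦ ?_⟩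
  have conj_prod := (((collect l hl).symm.mul_left (gen a * gt)).mul_right (gen a * gt)⁻¹)
  rw [← MulAut.conj_apply, ← MulAut.conj_apply, map_list_prod, List.map_map] at conj_prod
  exact ((split l hl.parity_swaps).trans (conj_prod.mul_right _)).mono (add_mul ..).ge

-- One step from a word to its two sections costs quadratic area, while `length - 1` is at least
-- halved for each of them, so the costs of the recursion form a geometric series.
theorem exists_forall_isTrivial_areaLE :
    ∃ K, ∀ l, IsTrivial l → AreaLE Rt (K * (l.length - 1) ^ 2) (eval gen l) := by
  obtain ⟨c₁, reduction⟩ := exists_areaEq_reduce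
  obtain ⟨c₂, split⟩ := exists_areaEq_conj_sec_mul_conj_sec
  refine ⟨8 * (c₁ + c₂), fun l hl ↦ ?_⟩
  induction hn : l.length using Nat.strong_induction_on generalizing l with
  | _ n ih =>
    obtain hn1 | hn1 := le_or_gt n 1
    · rw [hl.eq_nil_of_length_le_one (hn.trans_le hn1)]
      exact AreaLE.one.mono (Nat.zero_le _)
    · have section_areaLE (s : Bool) : AreaLE Rt
          (8 * (c₁ + c₂) * ((sec s (reduce l)).length - 1) ^ 2) (eval gen (sec s (reduce l))) := by
        have := two_mul_length_sec_reduce_le s l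
        exact ih _ (by lia) _ ((isTrivial_iff.1 hl.reduce).2 s) rfl
      refine (((reduction l).trans (split _ hl.reduce)).areaLE
        (((section_areaLE false).conj _).mul ((section_areaLE true).conj _))).mono ?_
      have half_le (s : Bool) : 2 * ((sec s (reduce l)).length - 1) ≤ n - 1 := by
        have := two_mul_length_sec_reduce_le s l
        lia
      have two_le : n ≤ 2 * (n - 1) := by lia
      calc c₁ * l.length + c₂ * (reduce l).length ^ 2 +
            (8 * (c₁ + c₂) * ((sec false (reduce l)).length - 1) ^ 2 +
              8 * (c₁ + c₂) * ((sec true (reduce l)).length - 1) ^ 2)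
          = c₁ * n + c₂ * (reduce l).length ^ 2 + 2 * (c₁ + c₂) *
              ((2 * ((sec false (reduce l)).length - 1)) ^ 2 +
                (2 * ((sec true (reduce l)).length - 1)) ^ 2) := by rw [hn]; ring
        _ ≤ c₁ * n ^ 2 + c₂ * n ^ 2 + 2 * (c₁ + c₂) * ((n - 1) ^ 2 + (n - 1) ^ 2) := by
            gcongr
            · exact Nat.le_self_pow two_ne_zero n
            · exact hn ▸ length_reduce_le l
            · exact half_le false
            · exact half_le true
        _ ≤ c₁ * (2 * (n - 1)) ^ 2 + c₂ * (2 * (n - 1)) ^ 2 +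
              2 * (c₁ + c₂) * ((n - 1) ^ 2 + (n - 1) ^ 2) := by gcongr
        _ = 8 * (c₁ + c₂) * (n - 1) ^ 2 := by ring

end Decomposition

section Collecting

/-- Moving the powers of `t` in `tⁱ U` to the right leaves a word in `a, b, c, d` followed by `tʲ`.
The word has at most `n * 2 ^ M` letters `a` and at most `n * 2 ^ M` other letters, and the area
used is at most `K` times that bound. In the applications `n` is the number of letters of `U` other
than `t`, and `M` bounds the powers of `t` that occur. -/
def Collects (K M n i j : ℕ) (U : F5) : Prop :=
  ∃ w, (∀ s, (w.map swaps).count s ≤ n * 2 ^ M) ∧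
    AreaEq Rt (K * (n * 2 ^ M)) (gt ^ i * U) (eval gen w * gt ^ j)

theorem length_eq_count_map_swaps (w : List Letter) :
    w.length = (w.map swaps).count true + (w.map swaps).count false := by
  rw [List.count_true_add_count_false, List.length_map]

theorem count_map_swaps_flatMap_sigma (w : List Letter) :
    ((w.flatMap sigma).map swaps).count true = 2 * (w.map swaps).count true ∧
      ((w.flatMap sigma).map swaps).count false = w.length := by
  induction w with
  | nil => simp
  | cons g w ih =>
    cases g <;> simp_all [sigma, swaps]
    lia

namespace Collects

variable {K M M' n m i j k : ℕ} {U V : F5}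

theorem mono (h : Collects K M n i j U) (hM : M ≤ M') : Collects K M' n i j U := by
  obtain ⟨w, hw, harea⟩ := h
  have bound_le : n * 2 ^ M ≤ n * 2 ^ M' := by gcongr; exact one_le_two
  exact ⟨w, fun s ↦ (hw s).trans bound_le, harea.mono (Nat.mul_le_mul_left K bound_le)⟩

theorem of_eq (h : gt ^ i * U = gt ^ j) : Collects K M 0 i j U :=
  ⟨[], by simp, by simpa [h] using AreaEq.of_eq rfl⟩

theorem mul (hU : Collects K M n i j U) (hV : Collects K M m j k V) :
    Collects K M (n + m) i k (U * V) := by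
  obtain ⟨w, hw, harea⟩ := hU
  obtain ⟨w', hw', harea'⟩ := hV
  refine ⟨w ++ w', fun s ↦ ?_, ?_⟩
  · rw [List.map_append, List.count_append, add_mul]
    exact add_le_add (hw s) (hw' s)
  · have := (harea.mul_right V).trans ((AreaEq.of_eq (mul_assoc _ _ _)).trans
      (harea'.mul_left (eval gen w)))
    simpa [mul_assoc, add_mul, mul_add] using this

end Collects

theorem exists_areaEq_mul_eval_flatMap_sigma : ∃ c, ∀ w,
    AreaEq Rt (c * w.length) (gt * eval gen w) (eval gen (w.flatMap sigma) * gt) := by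
  obtain ⟨c, hc⟩ := exists_forall_areaEq (R := Rt) (u := fun g ↦ gt * gen g)
    (v := fun g ↦ eval gen (sigma g) * gt) fun g ↦ by
      change PresentedGroup.mk Rt _ = PresentedGroup.mk Rt _
      simpa only [map_mul, map_eval, Function.comp_apply] using
        mul_inv_eq_iff_eq_mul.1 (hnnRelations_mk.conj g)
  refine ⟨c, fun w ↦ ?_⟩
  rw [eval_flatMap]
  exact AreaEq.mul_prod_map hc w

theorem Collects.shift {c K M n i j : ℕ} {U : F5} (hc : ∀ w,
      AreaEq Rt (c * w.length) (gt * eval gen w) (eval gen (w.flatMap sigma) * gt))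
    (hK : 2 * c ≤ K) (h : Collects K M n i j U) : Collects K (M + 1) n (i + 1) (j + 1) U := by
  obtain ⟨w, hw, harea⟩ := h
  have length_le : w.length ≤ 2 * (n * 2 ^ M) := by
    rw [length_eq_count_map_swaps, two_mul]
    exact add_le_add (hw true) (hw false)
  refine ⟨w.flatMap sigma, ?_, ?_⟩
  · obtain ⟨count_true, count_false⟩ := count_map_swaps_flatMap_sigma w
    rw [pow_succ', mul_left_comm, Bool.forall_bool, count_true, count_false]
    exact ⟨length_le, Nat.mul_le_mul_left 2 (hw true)⟩
  · have := (harea.mul_left gt).trans ((AreaEq.of_eq (mul_assoc _ _ _).symm).trans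
      ((hc w).mul_right (gt ^ j)))
    rw [pow_succ' gt i, pow_succ' gt j, mul_assoc, ← mul_assoc (eval gen _)]
    refine this.mono ?_
    calc K * (n * 2 ^ M) + (0 + c * w.length)
        ≤ K * (n * 2 ^ M) + (0 + c * (2 * (n * 2 ^ M))) := by gcongr
      _ = K * (n * 2 ^ M) + 2 * c * (n * 2 ^ M) := by ring
      _ ≤ K * (n * 2 ^ M) + K * (n * 2 ^ M) := by gcongr
      _ = K * (n * 2 ^ (M + 1)) := by ring

/-- `K` is large enough for the bounds of `Collects K` to survive conjugation by `t` and to hold for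
the letters `a, b, c, d` and their inverses. -/
structure IsCollectingConstant (K : ℕ) : Prop where
  shift : ∀ {M n i j U}, Collects K M n i j U → Collects K (M + 1) n (i + 1) (j + 1) U
  letter : ∀ (g : Letter) ε i, Collects K i 1 i i (FreeGroup.mk [(g.toL5, ε)])

theorem exists_isCollectingConstant : ∃ K, IsCollectingConstant K := by
  obtain ⟨c, hc⟩ := exists_areaEq_mul_eval_flatMap_sigma
  obtain ⟨c', letter⟩ := exists_forall_areaEq (R := Rt) (ι := Letter × Bool)
    (u := fun p ↦ FreeGroup.mk [(p.1.toL5, p.2)]) (v := fun p ↦ gen p.1) fun ⟨g, ε⟩ ↦ by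
      change PresentedGroup.mk Rt _ = PresentedGroup.mk Rt _
      cases ε
      · exact hnnRelations_mk.inv_eq g
      · rfl
  refine ⟨max (2 * c) c', fun h ↦ h.shift hc (le_max_left _ _), fun g ε i ↦ ?_⟩
  induction i with
  | zero =>
    refine ⟨[g], fun s ↦ List.count_le_length, ?_⟩
    simpa using (letter (g, ε)).mono (le_max_right _ _)
  | succ i ih => exact ih.shift hc (le_max_left _ _)

/-- The powers of `t` in `U` can be collected as in `Collects`, for a word `U` with `P` letters `t`,
`Q` letters `t⁻¹` and `n` other letters. With `i` the least power for which no negative power of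
`t` occurs in `tⁱ U`, the powers of `t` never exceed the larger of `P` and `Q`. -/
def Collectable (K P Q n : ℕ) (U : F5) : Prop :=
  ∃ i j, i ≤ Q ∧ i + P = j + Q ∧ Collects K (max P Q) n i j U

namespace Collectable

variable {K P Q n : ℕ} {U : F5}

theorem letter_mul (hK : IsCollectingConstant K) (h : Collectable K P Q n U) (g : Letter)
    (ε : Bool) : Collectable K P Q (n + 1) (FreeGroup.mk [(g.toL5, ε)] * U) := by
  obtain ⟨i, j, hi, hij, hU⟩ := h
  rw [add_comm n]
  exact ⟨i, j, hi, hij, ((hK.letter g ε i).mono (le_max_of_le_right hi)).mul hU⟩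

theorem gt_inv_mul (h : Collectable K P Q n U) : Collectable K P (Q + 1) n (gt⁻¹ * U) := by
  obtain ⟨i, j, hi, hij, hU⟩ := h
  have descend : Collects K (max P (Q + 1)) 0 (i + 1) i gt⁻¹ := .of_eq (by simp [pow_succ])
  refine ⟨i + 1, j, by lia, by lia, ?_⟩
  simpa using descend.mul (hU.mono (by lia))

theorem gt_mul (hK : IsCollectingConstant K) (h : Collectable K P Q n U) :
    Collectable K (P + 1) Q n (gt * U) := by
  obtain ⟨i, j, hi, hij, hU⟩ := h
  have ascend (i : ℕ) : Collects K (max (P + 1) Q) 0 i (i + 1) gt := .of_eq (pow_succ gt i).symm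
  obtain _ | i := i
  · refine ⟨0, j + 1, by lia, by lia, ?_⟩
    simpa using (ascend 0).mul ((hK.shift hU).mono (by lia))
  · refine ⟨i, j, by lia, by lia, ?_⟩
    simpa using (ascend i).mul (hU.mono (by lia))

end Collectable

theorem IsCollectingConstant.collectable_mk {K : ℕ} (hK : IsCollectingConstant K)
    (l : List (L5 × Bool)) : Collectable K (l.count (.t, true)) (l.count (.t, false))
      (l.countP (·.1 ≠ .t)) (FreeGroup.mk l) := by
  induction l with
  | nil => exact ⟨0, 0, by simp, by simp, .of_eq (by simp [← FreeGroup.one_eq_mk])⟩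
  | cons x l ih =>
    obtain ⟨_ | _ | _ | _ | _, ε⟩ := x
    · simpa [toL5] using ih.letter_mul hK a ε
    · simpa [toL5] using ih.letter_mul hK b ε
    · simpa [toL5] using ih.letter_mul hK c ε
    · simpa [toL5] using ih.letter_mul hK d ε
    · cases ε
      · simpa [gt, FreeGroup.of, FreeGroup.invRev] using ih.gt_inv_mul
      · simpa [gt, FreeGroup.of] using ih.gt_mul hK

end Collecting

section Dehn

theorem eq_of_mk_gt_pow_eq {i j : ℕ} {w : List Letter}
    (h : PresentedGroup.mk Rt (gt ^ i) = PresentedGroup.mk Rt (eval gen w * gt ^ j)) : i = j := by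
  have exponent : HNNRelations (fun _ ↦ (1 : Multiplicative ℤ)) (Multiplicative.ofAdd 1) :=
    { mul_self := by simp, bcd := by simp, ad_pow := by simp, adacac_pow := by simp
      conj := fun g ↦ by simp [eval] }
  obtain ⟨φ, φ_eval, φ_gt⟩ := exponent.exists_hom
  have := congrArg φ h
  rw [map_mul, map_mul, φ_eval, map_pow, map_pow, map_pow, map_pow, φ_gt] at this
  simpa [eval, ← ofAdd_nsmul] using this

theorem Collectable.exists_areaEq_conj {K P Q n : ℕ} {W : F5} (h : Collectable K P Q n W)
    (hW : W ∈ Subgroup.normalClosure Rt) : P = Q ∧ ∃ i w, IsTrivial w ∧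
      w.length ≤ 2 * (n * 2 ^ P) ∧
        AreaEq Rt (K * (n * 2 ^ P)) (gt ^ i * W * (gt ^ i)⁻¹) (eval gen w) := by
  obtain ⟨i, j, -, hij, w, hw, harea⟩ := h
  have mk_eq : PresentedGroup.mk Rt (gt ^ i) = PresentedGroup.mk Rt (eval gen w * gt ^ j) := by
    have mk_W : PresentedGroup.mk Rt W = 1 := (QuotientGroup.eq_one_iff W).2 hW
    have : PresentedGroup.mk Rt (gt ^ i * W) = PresentedGroup.mk Rt (eval gen w * gt ^ j) :=
      harea.mk_eq_mk
    rwa [map_mul, mk_W, mul_one] at this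
  obtain rfl := eq_of_mk_gt_pow_eq mk_eq
  obtain rfl : P = Q := by lia
  rw [max_self] at hw harea
  refine ⟨rfl, i, w, ?_, ?_, ?_⟩
  · apply isTrivial_of_mk_eval_eq_one
    simpa using mk_eq
  · rw [length_eq_count_map_swaps, two_mul]
    exact add_le_add (hw true) (hw false)
  · simpa using harea.mul_right (gt ^ i)⁻¹

theorem sq_le_two_mul_two_pow (n : ℕ) : n ^ 2 ≤ 2 * 2 ^ n := by
  induction n with
  | zero => decide
  | succ n ih =>
    have := n.lt_two_pow_self
    rw [pow_succ 2]
    lia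

theorem Collectable.areaLE {K₁ K₂ P Q n : ℕ} {W : F5}
    (hK₂ : ∀ l, IsTrivial l → AreaLE Rt (K₂ * (l.length - 1) ^ 2) (eval gen l))
    (h : Collectable K₁ P Q n W) (hW : W ∈ Subgroup.normalClosure Rt) :
    AreaLE Rt ((K₁ + 8 * K₂) * 2 ^ (P + Q + n)) W := by
  obtain ⟨rfl, i, w, w_trivial, length_le, conj_areaEq⟩ := h.exists_areaEq_conj hW
  have linear_le : n * 2 ^ P ≤ 2 ^ (P + P + n) := by
    rw [pow_add, mul_comm]
    exact Nat.mul_le_mul (Nat.pow_le_pow_right two_pos (by lia)) n.lt_two_pow_self.le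
  have square_le : (w.length - 1) ^ 2 ≤ 8 * 2 ^ (P + P + n) := calc
    (w.length - 1) ^ 2 ≤ (2 * (n * 2 ^ P)) ^ 2 := by gcongr; lia
    _ = 4 * (2 ^ (P + P) * n ^ 2) := by ring
    _ ≤ 4 * (2 ^ (P + P) * (2 * 2 ^ n)) := by gcongr; exact sq_le_two_mul_two_pow n
    _ = 8 * 2 ^ (P + P + n) := by ring
  have conj_areaLE := (conj_areaEq.areaLE (hK₂ w w_trivial)).conj (gt ^ i)⁻¹
  have conj_conj : (gt ^ i)⁻¹ * (gt ^ i * W * (gt ^ i)⁻¹) * (gt ^ i)⁻¹⁻¹ = W := by group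
  rw [conj_conj] at conj_areaLE
  refine conj_areaLE.mono ?_
  calc K₁ * (n * 2 ^ P) + K₂ * (w.length - 1) ^ 2
      ≤ K₁ * 2 ^ (P + P + n) + K₂ * (8 * 2 ^ (P + P + n)) := by gcongr
    _ = (K₁ + 8 * K₂) * 2 ^ (P + P + n) := by ring

theorem count_add_count_add_countP (l : List (L5 × Bool)) :
    l.count (.t, true) + l.count (.t, false) + l.countP (·.1 ≠ .t) = l.length := by
  induction l with
  | nil => rfl
  | cons x l ih => obtain ⟨_ | _ | _ | _ | _, _ | _⟩ := x <;> simp [← ih] <;> lia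

end Dehn

end Grigorchuk

open Grigorchuk in
theorem gamma_t_dehn_function_upper_bound_general :
    ∃ C : ℕ, 1 < C ∧ ∀ W ∈ Subgroup.normalClosure Rt,
      ∃ L ≤ C * 2 ^ W.norm, IsProdConjPM Rt L W := by
  obtain ⟨K₁, hK₁⟩ := exists_isCollectingConstant
  obtain ⟨K₂, hK₂⟩ := exists_forall_isTrivial_areaLE
  refine ⟨K₁ + 8 * K₂ + 2, by lia, fun W hW ↦ ?_⟩
  have collectable := hK₁.collectable_mk W.toWord
  rw [FreeGroup.mk_toWord] at collectable
  have area_le := collectable.areaLE hK₂ hW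
  rw [count_add_count_add_countP] at area_le
  exact area_le.mono (Nat.mul_le_mul_right _ (Nat.le_add_right _ 2))

/-- the Dehn 2-function of the finite presentation of `Γ_t`
is bounded from above by `C₂ · 2ˣ · x`. -/
theorem gamma_t_dehn_function_upper_bound :
    ∃ C₂ : ℝ, 1 < C₂ ∧
      ∀ x : ℕ, 1 ≤ x →
        ∀ W ∈ Subgroup.normalClosure Rt, FreeGroup.norm W ≤ x →
          ∃ L : ℕ, (L : ℝ) ≤ C₂ * (x : ℝ) * 2 ^ (x : ℝ) ∧
            IsProdConjPM Rt L W := by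
  obtain ⟨C, hC, bound⟩ := gamma_t_dehn_function_upper_bound_general
  refine ⟨C, mod_cast hC, fun x hx W hW hWx ↦ ?_⟩
  obtain ⟨L, hL, hprod⟩ := bound W hW
  refine ⟨L, ?_, hprod⟩
  rw [Real.rpow_natCast]
  have : L ≤ C * x * 2 ^ x := calc
    L ≤ C * 2 ^ W.norm := hL
    _ ≤ C * x * 2 ^ x := by
      gcongr
      · exact Nat.le_mul_of_pos_right C hx
      · exact one_le_two
  exact_mod_cast this
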